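/- Bisection Lemma: Let K be a statistical ALC knowledge base and C, D arbitrary ALC concepts. If there exist models I₀ and I₁ of K with [D]^{I₀} > 0 and [D]^{I₁} > 0 such that r₀ = [C ⊓ D]^{I₀}/[D]^{I₀} < [C ⊓ D]^{I₁}/[D]^{I₁} = r₁, then there exists a model I of K with [D]^I > 0 such that [C ⊓ D]^I/[D]^I = (r₀ + r₁)/2. -/

import Mathlib

open scoped Classical

/-- ALC concepts over concept names and role names (both drawn from ℕ,
regarded as disjoint name spaces). -/
inductive Cpt : Type where
  | top : Cpt
  | atom : ℕ → Cpt
  | neg : Cpt → Cpt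
  | inter : Cpt → Cpt → Cpt
  | ex : ℕ → Cpt → Cpt
deriving DecidableEq

/-- A finite interpretation with domain drawn from the type `α`. -/
structure Interp (α : Type) where
  dom : Finset α
  dom_nonempty : dom.Nonempty
  conc : ℕ → Finset α
  conc_sub : ∀ a, conc a ⊆ dom
  role : ℕ → Finset (α × α)
  role_sub : ∀ r, role r ⊆ dom ×ˢ dom

/-- The extension `C^I` of a concept. -/
noncomputable def Interp.ext {α : Type} (I : Interp α) : Cpt → Finset α
  | .top => I.dom
  | .atom a => I.conc a
  | .neg c => I.dom \ I.ext c
  | .inter c d => I.ext c ∩ I.ext d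
  | .ex r c => I.dom.filter (fun d => ∃ e ∈ I.ext c, (d, e) ∈ I.role r)

/-- `[C]^I`, the cardinality of the extension of `C`. -/
noncomputable def cardC {α : Type} (I : Interp α) (c : Cpt) : ℕ := (I.ext c).card

/-- A probabilistic conditional `(C|D)[l,u]`. -/
structure Cond : Type where
  C : Cpt
  D : Cpt
  l : ℚ
  u : ℚ
deriving DecidableEq

/-- `I ⊨ (C|D)[l,u]` iff `[D]^I = 0` or `l ≤ [C ⊓ D]^I/[D]^I ≤ u`. -/
def satCond {α : Type} (I : Interp α) (κ : Cond) : Prop :=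
  cardC I κ.D = 0 ∨
    (κ.l ≤ (cardC I (.inter κ.C κ.D) : ℚ) / (cardC I κ.D : ℚ) ∧
     (cardC I (.inter κ.C κ.D) : ℚ) / (cardC I κ.D : ℚ) ≤ κ.u)

/-- Finite interpretations (with domain drawn from the countable set ℕ). -/
abbrev FInterp := Interp ℕ

/-- The models of a knowledge base (finite set of conditionals). -/
def Models (K : Finset Cond) : Set FInterp := {I | ∀ κ ∈ K, satCond I κ}

/-- l-entailment: every model of `K` satisfies the conditional. -/
def entailsL (K : Finset Cond) (κ : Cond) : Prop := ∀ I ∈ Models K, satCond I κ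

/-!
Cardinalities of concept extensions add up over disjoint unions, and each conditional amounts to
two linear inequalities between such cardinalities, which are preserved under sums. Hence `a` copies
of `I₀` next to `b` copies of `I₁` again form a model, in which the ratio `[C ⊓ D] / [D]` is the
mean of `r₀` and `r₁` with weights proportional to `a * [D]^{I₀}` and `b * [D]^{I₁}`. Taking
`a = m * [D]^{I₁}` and `b = n * [D]^{I₀}` makes these weights proportional to `m` and `n`, so every
rational convex combination of `r₀` and `r₁` is attained.
-/

namespace Interp

variable {α β : Type}

/-- The isomorphic copy of `I` along an injection of its ambient type. -/
@[simps]
def map (f : α ↪ β) (I : Interp α) : Interp β where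
  dom := I.dom.map f
  dom_nonempty := I.dom_nonempty.map
  conc A := (I.conc A).map f
  conc_sub A := Finset.map_subset_map.2 (I.conc_sub A)
  role r := (I.role r).map (f.prodMap f)
  role_sub r := by
    rw [← Finset.prodMap_map_product]
    exact Finset.map_subset_map.2 (I.role_sub r)

theorem mk_mem_role_map {f : α ↪ β} {I : Interp α} {r : ℕ} {x y : α} :
    (f x, f y) ∈ (I.map f).role r ↔ (x, y) ∈ I.role r :=
  Finset.mem_map' (f.prodMap f) (a := (x, y))

theorem ext_map (f : α ↪ β) (I : Interp α) (C : Cpt) : (I.map f).ext C = (I.ext C).map f := by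
  induction C with
  | top => rfl
  | atom A => rfl
  | neg C ih => simp only [ext, ih, map_dom, Finset.map_sdiff]
  | inter C D ihC ihD => simp only [ext, ihC, ihD, Finset.map_inter]
  | ex r C ih =>
    simp only [ext, ih, map_dom, Finset.filter_map, Function.comp_def, Finset.mem_map,
      exists_exists_and_eq_and, mk_mem_role_map]

theorem cardC_map (f : α ↪ β) (I : Interp α) (C : Cpt) : cardC (I.map f) C = cardC I C := by
  simp only [cardC, ext_map, Finset.card_map]

section Sigma

variable {ι : Type} [Fintype ι] [Nonempty ι] {α : ι → Type}

/-- The disjoint union of a finite family of interpretations. -/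
@[simps]
noncomputable def sigma (I : ∀ i, Interp (α i)) : Interp (Σ i, α i) where
  dom := Finset.univ.sigma fun i ↦ (I i).dom
  dom_nonempty :=
    Finset.sigma_nonempty.2 ((Finset.univ_nonempty (α := ι)).imp fun i hi ↦
      ⟨hi, (I i).dom_nonempty⟩)
  conc A := Finset.univ.sigma fun i ↦ (I i).conc A
  conc_sub A := Finset.sigma_mono subset_rfl fun i ↦ (I i).conc_sub A
  role r := Finset.univ.biUnion fun i ↦
    ((I i).role r).map ((Function.Embedding.sigmaMk i).prodMap (Function.Embedding.sigmaMk i))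
  role_sub r := by
    simp only [Finset.biUnion_subset, Finset.map_subset_iff_subset_preimage]
    intro i _ p hp
    simpa using (I i).role_sub r hp

theorem mk_mem_role_sigma {I : ∀ i, Interp (α i)} {r : ℕ} {i : ι} {x : α i} {p : Σ i, α i} :
    (⟨i, x⟩, p) ∈ (sigma I).role r ↔ ∃ y, (x, y) ∈ (I i).role r ∧ ⟨i, y⟩ = p := by
  simp only [sigma_role, Finset.mem_biUnion, Finset.mem_univ, true_and, Finset.mem_map]
  constructor
  · rintro ⟨j, ⟨x', y⟩, hxy, heq⟩
    obtain ⟨⟨⟩, rfl⟩ := Prod.mk.inj heq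
    exact ⟨y, hxy, rfl⟩
  · rintro ⟨y, hxy, rfl⟩
    exact ⟨i, (x, y), hxy, rfl⟩

theorem ext_sigma (I : ∀ i, Interp (α i)) (C : Cpt) :
    (sigma I).ext C = Finset.univ.sigma fun i ↦ (I i).ext C := by
  induction C with
  | top => rfl
  | atom A => rfl
  | neg C ih => ext; simp [ext, ih]
  | inter C D ihC ihD => ext; simp [ext, ihC, ihD]
  | ex r C ih =>
    ext ⟨i, x⟩
    simp only [ext, ih, Finset.mem_filter, Finset.mem_sigma, Finset.mem_univ, true_and, sigma_dom,
      mk_mem_role_sigma]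
    refine and_congr_right fun _ ↦ ⟨?_, ?_⟩
    · rintro ⟨_, hy, y, hxy, rfl⟩
      exact ⟨y, hy, hxy⟩
    · rintro ⟨y, hy, hxy⟩
      exact ⟨⟨i, y⟩, hy, y, hxy, rfl⟩

theorem cardC_sigma (I : ∀ i, Interp (α i)) (C : Cpt) :
    cardC (sigma I) C = ∑ i, cardC (I i) C := by
  simp only [cardC, ext_sigma, Finset.card_sigma]

end Sigma

theorem exists_cardC_eq_sum [Infinite α] {ι : Type} [Fintype ι] [Nonempty ι] (I : ι → Interp α) :
    ∃ J : Interp α, ∀ C, cardC J C = ∑ i, cardC (I i) C := by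
  have ⟨f⟩ : Nonempty ((Σ _ : ι, α) ↪ α) := by
    rw [← Cardinal.le_def, Cardinal.mk_sigma, Cardinal.sum_const']
    exact Cardinal.mul_le_of_le (Cardinal.aleph0_le_mk α)
      (Cardinal.mk_lt_aleph0.le.trans (Cardinal.aleph0_le_mk α)) le_rfl
  exact ⟨(sigma I).map f, fun C ↦ by rw [cardC_map, cardC_sigma]⟩

theorem exists_cardC_eq_mul_add_mul [Infinite α] (I₀ I₁ : Interp α) {a b : ℕ} (hab : 0 < a + b) :
    ∃ J : Interp α, ∀ C, cardC J C = a * cardC I₀ C + b * cardC I₁ C := by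
  have : Nonempty (Fin a ⊕ Fin b) := by
    rw [← Fintype.card_pos_iff]
    simpa using hab
  obtain ⟨J, hJ⟩ := exists_cardC_eq_sum (Sum.elim (fun _ : Fin a ↦ I₀) fun _ : Fin b ↦ I₁)
  exact ⟨J, fun C ↦ by simp [hJ]⟩

/-- The ratio `[C ⊓ D]^I / [D]^I`, with value `0` if `[D]^I = 0`. -/
noncomputable def condRatio (I : Interp α) (C D : Cpt) : ℚ :=
  (cardC I (.inter C D) : ℚ) / (cardC I D : ℚ)

theorem cardC_inter_eq_zero {I : Interp α} {C D : Cpt} (hD : cardC I D = 0) :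
    cardC I (.inter C D) = 0 :=
  Nat.eq_zero_of_le_zero (hD ▸ Finset.card_le_card Finset.inter_subset_right)

theorem cardC_mul_condRatio (I : Interp α) (C D : Cpt) :
    cardC I D * I.condRatio C D = cardC I (.inter C D) :=
  mul_div_cancel_of_imp' fun hD ↦ mod_cast cardC_inter_eq_zero (mod_cast hD)

end Interp

section Conditionals

open Interp

variable {α β γ : Type}

theorem satCond_iff_mul_le {I : Interp α} {κ : Cond} :
    satCond I κ ↔ κ.l * cardC I κ.D ≤ cardC I (.inter κ.C κ.D) ∧
      (cardC I (.inter κ.C κ.D) : ℚ) ≤ κ.u * cardC I κ.D := by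
  rcases Nat.eq_zero_or_pos (cardC I κ.D) with hD | hD
  · simp [satCond, hD, cardC_inter_eq_zero hD]
  · have hD' : (0 : ℚ) < cardC I κ.D := mod_cast hD
    rw [satCond, le_div_iff₀ hD', div_le_iff₀ hD', or_iff_right hD.ne']

theorem satCond_of_cardC_eq_mul_add_mul {I₀ : Interp α} {I₁ : Interp β} {J : Interp γ} {a b : ℕ}
    (hJ : ∀ C, cardC J C = a * cardC I₀ C + b * cardC I₁ C) {κ : Cond}
    (h₀ : satCond I₀ κ) (h₁ : satCond I₁ κ) : satCond J κ := by
  obtain ⟨hl₀, hu₀⟩ := satCond_iff_mul_le.1 h₀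
  obtain ⟨hl₁, hu₁⟩ := satCond_iff_mul_le.1 h₁
  rw [satCond_iff_mul_le, hJ, hJ]
  push_cast
  constructor
  · calc κ.l * (a * cardC I₀ κ.D + b * cardC I₁ κ.D)
        = a * (κ.l * cardC I₀ κ.D) + b * (κ.l * cardC I₁ κ.D) := by ring
      _ ≤ a * cardC I₀ (.inter κ.C κ.D) + b * cardC I₁ (.inter κ.C κ.D) := by gcongr
  · calc (a * cardC I₀ (.inter κ.C κ.D) + b * cardC I₁ (.inter κ.C κ.D) : ℚ)
        ≤ a * (κ.u * cardC I₀ κ.D) + b * (κ.u * cardC I₁ κ.D) := by gcongr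
      _ = κ.u * (a * cardC I₀ κ.D + b * cardC I₁ κ.D) := by ring

theorem condRatio_of_cardC_eq_mul_add_mul {I₀ : Interp α} {I₁ : Interp β} {J : Interp γ} {a b : ℕ}
    (hJ : ∀ C, cardC J C = a * cardC I₀ C + b * cardC I₁ C) (C D : Cpt) :
    J.condRatio C D = (a * cardC I₀ D / cardC J D) * I₀.condRatio C D +
      (b * cardC I₁ D / cardC J D) * I₁.condRatio C D := by
  rw [condRatio, hJ (.inter C D)]
  push_cast
  rw [← cardC_mul_condRatio, ← cardC_mul_condRatio]
  ring

end Conditionals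

theorem exists_nat_eq_div_add {a b : ℚ} (ha : 0 ≤ a) (hb : 0 ≤ b) (hab : a + b = 1) :
    ∃ m n : ℕ, 0 < m + n ∧ a = m / (m + n) ∧ b = n / (m + n) := by
  lift a to ℚ≥0 using ha
  have ha_eq : (a : ℚ) = a.num / a.den := NNRat.cast_def a
  have hden : (0 : ℚ) < a.den := mod_cast a.den_pos
  have hle : a.num ≤ a.den := by
    have : (a.num : ℚ) / a.den ≤ 1 := by linarith
    exact_mod_cast (div_le_one hden).1 this
  obtain ⟨n, hn⟩ := Nat.exists_eq_add_of_le hle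
  have hsum : (a.num + n : ℚ) = a.den := mod_cast hn.symm
  refine ⟨a.num, n, hn ▸ a.den_pos, by rw [hsum, ha_eq], ?_⟩
  calc b = 1 - a.num / a.den := by linarith
    _ = n / (a.num + n) := by rw [hsum]; field_simp; linarith

/-- The values of `[C ⊓ D]^I / [D]^I` over the models `I` of `K` with domain drawn from `α` and
`[D]^I > 0`. -/
def attainableRatios (α : Type) (K : Set Cond) (C D : Cpt) : Set ℚ :=
  {q | ∃ I : Interp α, (∀ κ ∈ K, satCond I κ) ∧ 0 < cardC I D ∧ I.condRatio C D = q}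

theorem bisection_general {α : Type} [Infinite α] (K : Set Cond) (C D : Cpt) :
    Convex ℚ (attainableRatios α K C D) := by
  rintro _ ⟨I₀, hK₀, hD₀, rfl⟩ _ ⟨I₁, hK₁, hD₁, rfl⟩ a b ha hb hab
  obtain ⟨m, n, hmn, rfl, rfl⟩ := exists_nat_eq_div_add ha hb hab
  have hcopies : 0 < m * cardC I₁ D + n * cardC I₀ D := by
    rcases Nat.add_pos_iff_pos_or_pos.1 hmn with hm | hn <;> positivity
  obtain ⟨J, hJ⟩ := Interp.exists_cardC_eq_mul_add_mul I₀ I₁ hcopies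
  have hDJ : cardC J D = (m + n) * (cardC I₀ D * cardC I₁ D) := by rw [hJ]; ring
  refine ⟨J, fun κ hκ ↦ satCond_of_cardC_eq_mul_add_mul hJ (hK₀ κ hκ) (hK₁ κ hκ), ?_, ?_⟩
  · rw [hDJ]
    positivity
  · rw [condRatio_of_cardC_eq_mul_add_mul hJ, hDJ]
    push_cast
    have hmn' : (m + n : ℚ) ≠ 0 := mod_cast hmn.ne'
    simp only [smul_eq_mul]
    field_simp

/-- Bisection Lemma. -/
theorem bisection (K : Finset Cond) (C D : Cpt) (I0 I1 : FInterp)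
    (h0 : I0 ∈ Models K) (h1 : I1 ∈ Models K)
    (d0 : 0 < cardC I0 D) (d1 : 0 < cardC I1 D)
    (hlt : (cardC I0 (.inter C D) : ℚ) / (cardC I0 D : ℚ) <
           (cardC I1 (.inter C D) : ℚ) / (cardC I1 D : ℚ)) :
    ∃ I ∈ Models K, 0 < cardC I D ∧
      (cardC I (.inter C D) : ℚ) / (cardC I D : ℚ) =
        ((cardC I0 (.inter C D) : ℚ) / (cardC I0 D : ℚ) +
         (cardC I1 (.inter C D) : ℚ) / (cardC I1 D : ℚ)) / 2 := by
  change (I0.condRatio C D + I1.condRatio C D) / 2 ∈ attainableRatios ℕ K C D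
  have mid_mem := (bisection_general K C D).midpoint_mem ⟨I0, h0, d0, rfl⟩ ⟨I1, h1, d1, rfl⟩
  simpa [midpoint_eq_smul_add, div_eq_inv_mul] using mid_mem
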